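/- For all integers d,k ≥ 1 and n ≥ 0 we have M^d_{k−1,n} ≤ C^d_{k,n} ≤ M^d_{k,n}. -/

import Mathlib

/-- Full binary trees (every internal node has exactly two children). -/
inductive BTree : Type
  | leaf : BTree
  | node : BTree → BTree → BTree
deriving DecidableEq

namespace BTree

/-- Number of leaves of a full binary tree. -/
def numLeaves : BTree → ℕ
  | leaf => 1
  | node l r => l.numLeaves + r.numLeaves

/-- The list of pairs (left depth, right depth) of the leaves, in preorder. -/
def leafDepths : BTree → List (ℕ × ℕ)
  | leaf => [(0, 0)]
  | node l r =>
      (l.leafDepths.map fun p => (p.1 + 1, p.2)) ++ (r.leafDepths.map fun p => (p.1, p.2 + 1))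

/-- The left depth sequence `ld(t)` of the leaves of `t`, in preorder. -/
def ld (t : BTree) : List ℕ := t.leafDepths.map Prod.fst

/-- The right depth sequence `rd(t)` of the leaves of `t`, in preorder. -/
def rd (t : BTree) : List ℕ := t.leafDepths.map Prod.snd

end BTree

/-- `b ~^d c` : the sequences have equal length and agree at every position where
either entry is `< d`. -/
def DepthEq (d : ℕ) : List ℕ → List ℕ → Prop :=
  List.Forall₂ (fun a b => min a b < d → a = b)

/-- `b ~_k c` : entrywise congruence mod `k` (and equal length). -/
def ModListEq (k : ℕ) : List ℕ → List ℕ → Prop :=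
  List.Forall₂ (fun a b => a % k = b % k)

/-- The relation `t ~ t'` iff `ld(t) ~^d ld(t')` and `rd(t) ~^e rd(t')`. -/
def DeRel (d e : ℕ) (t t' : BTree) : Prop :=
  DepthEq d t.ld t'.ld ∧ DepthEq e t.rd t'.rd

/-- The relation `t ~ t'` iff `ld(t) ~_k^d ld(t')` (i.e. `ld(t) ~_k ld(t')` and
`ld(t) ~^d ld(t')`). -/
def DkRel (d k : ℕ) (t t' : BTree) : Prop :=
  ModListEq k t.ld t'.ld ∧ DepthEq d t.ld t'.ld

/-- `T_n`: full binary trees with `n+1` leaves. -/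
def Tn (n : ℕ) : Type := {t : BTree // t.numLeaves = n + 1}

/-- `C^{d,e}_n`: the number of equivalence classes of the relation `DeRel d e` on `T_n`. -/
noncomputable def Cde (d e n : ℕ) : ℕ :=
  Nat.card (Quot (fun t t' : Tn n => DeRel d e t.1 t'.1))

/-- `C^d_{k,n}`: the number of equivalence classes of `ld(t) ~_k^d ld(t')` on `T_n`. -/
noncomputable def Cdk (d k n : ℕ) : ℕ :=
  Nat.card (Quot (fun t t' : Tn n => DkRel d k t.1 t'.1))

/-- Directions to a left or right child. -/
inductive Dir : Type
  | L : Dir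
  | R : Dir
deriving DecidableEq

/-- The maximal subtree rooted at the node at position `p` (if such a node exists). -/
def subtreeAt : BTree → List Dir → Option BTree
  | t, [] => some t
  | BTree.leaf, _ :: _ => none
  | BTree.node l _, Dir.L :: p => subtreeAt l p
  | BTree.node _ r, Dir.R :: p => subtreeAt r p

/-- Replace the maximal subtree rooted at position `p` by `s` (if the position exists). -/
def replaceAt : BTree → List Dir → BTree → Option BTree
  | _, [], s => some s
  | BTree.leaf, _ :: _, _ => none
  | BTree.node l r, Dir.L :: p, s => (replaceAt l p s).map fun l' => BTree.node l' r
  | BTree.node l r, Dir.R :: p, s => (replaceAt r p s).map fun r' => BTree.node l r'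

/-- `leftAssoc t₀ [t₁,…,t_m] = t₀ ∧ t₁ ∧ ⋯ ∧ t_m` with `∧` performed left to right. -/
def leftAssoc : BTree → List BTree → BTree := List.foldl BTree.node

/-- `t'` is obtained from `t` by a right `k`-rotation at the node at position `p`:
the maximal subtree `t₀ ∧ t₁ ∧ ⋯ ∧ t_{k+1}` rooted there (with `∧` performed left to
right) is replaced by `t₀ ∧ (t₁ ∧ ⋯ ∧ t_{k+1})`.  The left depth of that node is
`p.count Dir.L`. -/
def IsRightKRot (k : ℕ) (p : List Dir) (t t' : BTree) : Prop :=
  ∃ (t₀ t₁ : BTree) (rest : List BTree), rest.length = k ∧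
    subtreeAt t p = some (leftAssoc t₀ (t₁ :: rest)) ∧
    replaceAt t p (BTree.node t₀ (leftAssoc t₁ rest)) = some t'

/-- `IsTopOf s u`: `s` is a subtree of `u` rooted at the root of `u`. -/
def IsTopOf : BTree → BTree → Prop
  | BTree.leaf, _ => True
  | BTree.node l r, BTree.node l' r' => IsTopOf l l' ∧ IsTopOf r r'
  | BTree.node _ _, BTree.leaf => False

/-- `t` contains `s` at left depth `δ`: `t` has a subtree equal to `s` rooted at a node
of left depth `δ`. -/
def ContainsAt (t s : BTree) (δ : ℕ) : Prop :=
  ∃ (p : List Dir) (u : BTree), subtreeAt t p = some u ∧ p.count Dir.L = δ ∧ IsTopOf s u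

/-- `t` avoids `s` at left depth `δ`. -/
def AvoidsAt (t s : BTree) (δ : ℕ) : Prop := ¬ ContainsAt t s δ

/-- `comb_k`: the left-to-right `∧`-product of `k+1` single leaves. -/
def comb (k : ℕ) : BTree := leftAssoc BTree.leaf (List.replicate k BTree.leaf)

/-- `comb_k^1 := t₀ ∧ comb_k` with `t₀` a single leaf. -/
def comb1 (k : ℕ) : BTree := BTree.node BTree.leaf (comb k)

/-- One left `k`-rotation step, at a node of left depth at least `d-1`, from `t` to `t'`. -/
def LeftRotStep (d k : ℕ) (t t' : BTree) : Prop :=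
  ∃ p : List Dir, d - 1 ≤ p.count Dir.L ∧ IsRightKRot k p t' t

/-- The `(d;k)`-order: `s ≤ t` iff `s` is obtained from `t` by finitely many left
`k`-rotations at nodes of left depth at least `d-1`. -/
def dkLE (d k : ℕ) (s t : BTree) : Prop := Relation.ReflTransGen (LeftRotStep d k) t s

/-- `t` is `(d;k)`-minimal. -/
def dkMinimal (d k : ℕ) (t : BTree) : Prop := ∀ s, dkLE d k s t → s = t

/-- `t` is `(d;k)`-maximal. -/
def dkMaximal (d k : ℕ) (t : BTree) : Prop := ∀ s, dkLE d k t s → s = t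

/-- `M^d_{j,n}`: the number of binary trees in `T_n` avoiding `comb_{j+1}` at every left
depth at least `d-1`. -/
noncomputable def Mnum (j d n : ℕ) : ℕ :=
  Nat.card {t : BTree // t.numLeaves = n + 1 ∧ ∀ δ, d - 1 ≤ δ → AvoidsAt t (comb (j + 1)) δ}

/-!
Truncating left depths at `d` and reducing them modulo `k` turns the relation `~_k^d` into equality
of signatures, so `C^d_{k,n}` counts the signatures of the trees in `T_n`.

Lower bound: a tree avoiding `comb_k` at left depth at least `d` is recovered by reading its
signature from left to right. If the part still to be read begins at left depth `a`, its first
entry tells a leaf from an internal node: the first leaf has left depth `a` in one case and `a + i`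
with `0 < i` in the other, and `i < k` once `d ≤ a`. This gives the slightly sharper bound
`M^{d+1}_{k-1,n} ≤ C^d_{k,n}`.

Upper bound: if `comb_{k+1}` occurs at a node of left depth at least `d - 1`, the right `k`-rotation
`t₀ ∧ t₁ ∧ ⋯ ∧ t_{k+1} ↦ t₀ ∧ (t₁ ∧ ⋯ ∧ t_{k+1})` there only lowers the left depths in `t₀` by `k`,
to values that are still at least `d`. It keeps the signature and decreases the sum of the left
depths, so every class contains a tree avoiding `comb_{k+1}` at left depth at least `d - 1`.
-/

/-- What the relation `~_k^d` sees of a single left depth `a`: the value truncated at `d` and the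
residue modulo `k`. Encoding it as a function makes `~_k^d` the kernel of an entrywise map. -/
def depthKey (d k a : ℕ) : ℕ × ℕ := (min a d, a % k)

theorem depthKey_eq_iff {d k a b : ℕ} :
    depthKey d k a = depthKey d k b ↔ a % k = b % k ∧ (min a b < d → a = b) := by
  rw [depthKey, depthKey, Prod.mk.injEq, and_comm]
  exact and_congr_right fun _ => by omega

theorem depthKey_add_modulus {d k a : ℕ} (ha : d ≤ a) : depthKey d k (a + k) = depthKey d k a :=
  depthKey_eq_iff.2 ⟨Nat.add_mod_right a k, by omega⟩

theorem depthKey_ne_depthKey_add {d k a i : ℕ} (hi : 0 < i) (hik : d ≤ a → i < k) :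
    depthKey d k a ≠ depthKey d k (a + i) := by
  rw [Ne, depthKey_eq_iff]
  rintro ⟨hmod, hmin⟩
  rcases lt_or_ge a d with had | hda
  · have := hmin (by omega)
    omega
  · have hmodEq : a + 0 ≡ a + i [MOD k] := hmod
    have hdvd : k ∣ i := Nat.modEq_zero_iff_dvd.1 hmodEq.add_left_cancel'.symm
    exact (Nat.le_of_dvd hi hdvd).not_gt (hik hda)

namespace BTree

theorem ld_node (l r : BTree) : (node l r).ld = l.ld.map (· + 1) ++ r.ld := by
  simp [ld, leafDepths, Function.comp_def]

/-- The left depths of the leaves of `t` when the root of `t` is itself placed at left depth `a`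
in a larger tree. -/
def ldFrom (a : ℕ) (t : BTree) : List ℕ := t.ld.map (a + ·)

theorem ldFrom_zero (t : BTree) : t.ldFrom 0 = t.ld := by simp [ldFrom]

@[simp]
theorem ldFrom_leaf (a : ℕ) : leaf.ldFrom a = [a] := by simp [ldFrom, ld, leafDepths]

@[simp]
theorem ldFrom_node (a : ℕ) (l r : BTree) :
    (node l r).ldFrom a = l.ldFrom (a + 1) ++ r.ldFrom a := by
  simp [ldFrom, ld_node, Nat.add_assoc, Nat.add_comm 1]

theorem sum_ldFrom_strictMono (t : BTree) : StrictMono fun a => (t.ldFrom a).sum := by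
  intro a b hab
  induction t generalizing a b with
  | leaf => simpa using hab
  | node l r ihl ihr =>
    simpa using Nat.add_lt_add (ihl (Nat.add_lt_add_right hab 1)) (ihr hab)

/-- The number of edges on the path of left steps from the root to leaf `0`; a tree has `comb_m`
at its root exactly when this is at least `m`. -/
def spine : BTree → ℕ
  | leaf => 0
  | node l _ => l.spine + 1

theorem head?_ldFrom (a : ℕ) (t : BTree) : (t.ldFrom a).head? = some (a + t.spine) := by
  induction t generalizing a with
  | leaf => simp [spine]
  | node l r ihl _ => simp [ihl, spine, Nat.add_assoc, Nat.add_comm 1]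

theorem numLeaves_pos (t : BTree) : 0 < t.numLeaves := by
  cases t with
  | leaf => exact Nat.one_pos
  | node l r => exact Nat.add_pos_left l.numLeaves_pos _

theorem finite_setOf_numLeaves_le (n : ℕ) : {t : BTree | t.numLeaves ≤ n}.Finite := by
  induction n with
  | zero => exact Set.finite_empty.subset fun t ht => (t.numLeaves_pos.not_ge ht).elim
  | succ n ih =>
    refine ((Set.finite_singleton leaf).union (ih.image2 node ih)).subset ?_
    rintro (_ | ⟨l, r⟩) ht
    · exact .inl rfl
    · have hl := l.numLeaves_pos
      have hr := r.numLeaves_pos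
      rw [Set.mem_ofPred_eq, numLeaves] at ht
      exact .inr ⟨l, Set.mem_ofPred.2 (by omega), r, Set.mem_ofPred.2 (by omega), rfl⟩

theorem finite_setOf_numLeaves_eq (n : ℕ) : {t : BTree | t.numLeaves = n}.Finite :=
  (finite_setOf_numLeaves_le n).subset fun _ ht => le_of_eq ht

/-- The left depths of the leaves of `t`, rooted at left depth `a`, as seen by `~_k^d`. At `a = 0`
it is a complete invariant of the classes counted by `C^d_{k,n}`. -/
def signature (d k a : ℕ) (t : BTree) : List (ℕ × ℕ) := (t.ldFrom a).map (depthKey d k)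

@[simp]
theorem signature_leaf (d k a : ℕ) : leaf.signature d k a = [depthKey d k a] := by
  simp [signature]

@[simp]
theorem signature_node (d k a : ℕ) (l r : BTree) :
    (node l r).signature d k a = l.signature d k (a + 1) ++ r.signature d k a := by
  simp [signature]

theorem signature_add_modulus {d k a : ℕ} (ha : d ≤ a) (t : BTree) :
    t.signature d k (a + k) = t.signature d k a := by
  simp only [signature, ldFrom, List.map_map]
  refine List.map_congr_left fun x _ => ?_
  simpa [Nat.add_right_comm] using depthKey_add_modulus (k := k) (ha.trans (Nat.le_add_right a x))

theorem head?_signature (d k a : ℕ) (t : BTree) :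
    (t.signature d k a).head? = some (depthKey d k (a + t.spine)) := by
  simp [signature, head?_ldFrom]

end BTree

open BTree

theorem dkRel_iff_signature_eq {d k : ℕ} {s t : BTree} :
    DkRel d k s t ↔ s.signature d k 0 = t.signature d k 0 := by
  rw [DkRel, ModListEq, DepthEq, signature, signature, ldFrom_zero, ldFrom_zero,
    ← List.forall₂_eq_eq_eq, List.forall₂_map_left_iff, List.forall₂_map_right_iff]
  simp only [depthKey_eq_iff, List.forall₂_iff_get]
  grind

theorem Cdk_eq_ncard_signature (d k n : ℕ) :
    Cdk d k n = (signature d k 0 '' {t | t.numLeaves = n + 1}).ncard := by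
  let f : Tn n → List (ℕ × ℕ) := fun t => t.1.signature d k 0
  have hrel : (fun t t' : Tn n => DkRel d k t.1 t'.1) = Setoid.ker f := by
    ext t t'
    exact dkRel_iff_signature_eq
  rw [Cdk, hrel, Set.image_eq_range]
  exact Nat.card_congr (Setoid.quotientKerEquivRange f)

theorem comb_succ (m : ℕ) : comb (m + 1) = node (comb m) leaf := by
  simp [comb, leftAssoc, List.replicate_succ', List.foldl_append]

theorem isTopOf_comb_iff {m : ℕ} {t : BTree} : IsTopOf (comb m) t ↔ m ≤ t.spine := by
  induction m generalizing t with
  | zero => simp [comb, leftAssoc, IsTopOf]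
  | succ m ih => cases t <;> simp [comb_succ, IsTopOf, spine, ih]

theorem containsAt_leaf_iff {s : BTree} {δ : ℕ} :
    ContainsAt leaf s δ ↔ δ = 0 ∧ IsTopOf s leaf := by
  constructor
  · rintro ⟨_ | ⟨_, _⟩, u, hu, rfl, hs⟩
    · exact ⟨rfl, Option.some.inj hu ▸ hs⟩
    · exact nomatch hu
  · rintro ⟨rfl, hs⟩
    exact ⟨[], leaf, rfl, rfl, hs⟩

theorem containsAt_node_iff {l r s : BTree} {δ : ℕ} :
    ContainsAt (node l r) s δ ↔
      (δ = 0 ∧ IsTopOf s (node l r)) ∨ (∃ ε, δ = ε + 1 ∧ ContainsAt l s ε) ∨ ContainsAt r s δ := by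
  constructor
  · rintro ⟨_ | ⟨_ | _, p⟩, u, hu, rfl, hs⟩
    · exact .inl ⟨rfl, Option.some.inj hu ▸ hs⟩
    · exact .inr (.inl ⟨p.count Dir.L, by simp, p, u, hu, rfl, hs⟩)
    · exact .inr (.inr ⟨p, u, hu, by simp, hs⟩)
  · rintro (⟨rfl, hs⟩ | ⟨_, rfl, p, u, hu, rfl, hs⟩ | ⟨p, u, hu, rfl, hs⟩)
    · exact ⟨[], _, rfl, rfl, hs⟩
    · exact ⟨Dir.L :: p, u, hu, by simp, hs⟩
    · exact ⟨Dir.R :: p, u, hu, by simp, hs⟩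

/-- When the root of `t` is placed at left depth `a` in a larger tree, `t` avoids `comb_m` at every
left depth at least `e`, left depths being measured in the larger tree. -/
def CombFree (e m a : ℕ) (t : BTree) : Prop := ∀ δ, e ≤ a + δ → AvoidsAt t (comb m) δ

theorem combFree_succ_leaf (e m a : ℕ) : CombFree e (m + 1) a leaf := by
  simp [CombFree, AvoidsAt, containsAt_leaf_iff, isTopOf_comb_iff, spine]

theorem combFree_node_iff {e m a : ℕ} {l r : BTree} :
    CombFree e m a (node l r) ↔
      (e ≤ a → (node l r).spine < m) ∧ CombFree e m (a + 1) l ∧ CombFree e m a r := by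
  simp only [CombFree, AvoidsAt, containsAt_node_iff, isTopOf_comb_iff, not_or, imp_and,
    forall_and]
  refine and_congr ?_ (and_congr_left fun _ => ?_)
  · constructor
    · exact fun h ha => not_le.1 fun hm => h 0 ha ⟨rfl, hm⟩
    · rintro h _ ha ⟨rfl, hm⟩
      exact (h ha).not_ge hm
  · constructor
    · exact fun h δ hδ hc => h (δ + 1) (by omega) ⟨δ, rfl, hc⟩
    · rintro h _ hδ ⟨ε, rfl, hc⟩
      exact h ε (by omega) hc

theorem CombFree.mono {e e' m a : ℕ} {t : BTree} (h : CombFree e m a t) (he : e ≤ e') :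
    CombFree e' m a t :=
  fun δ hδ => h δ (he.trans hδ)

theorem Mnum_eq_ncard_combFree (j d n : ℕ) :
    Mnum j d n = {t : BTree | t.numLeaves = n + 1 ∧ CombFree (d - 1) (j + 1) 0 t}.ncard := by
  simp only [CombFree, Nat.zero_add]
  rfl

theorem finite_setOf_combFree (n e m a : ℕ) :
    {t : BTree | t.numLeaves = n ∧ CombFree e m a t}.Finite :=
  (finite_setOf_numLeaves_eq n).subset fun _ ht => ht.1

theorem Mnum_mono (j n : ℕ) : Monotone fun d => Mnum j d n := by
  intro d d' hd
  simp only [Mnum_eq_ncard_combFree]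
  exact Set.ncard_le_ncard (fun _ ht => ⟨ht.1, ht.2.mono (Nat.sub_le_sub_right hd 1)⟩)
    (finite_setOf_combFree ..)

theorem signature_leaf_append_ne_of_combFree {d k a : ℕ} {l r : BTree} {X Y : List (ℕ × ℕ)}
    (h : CombFree d k a (node l r)) :
    leaf.signature d k a ++ X ≠ (node l r).signature d k a ++ Y := by
  intro heq
  have hhead := congrArg List.head? heq
  simp only [List.head?_append, head?_signature, Option.some_or, Option.some.injEq] at hhead
  exact depthKey_ne_depthKey_add (Nat.succ_pos _) (combFree_node_iff.1 h).1 hhead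

-- The trailing lists `X` and `Y` make the statement inductive: the signature of the left subtree
-- is followed by that of the right one, and nothing marks where the former ends.
theorem eq_and_eq_of_signature_append_eq {d k a : ℕ} {s t : BTree} {X Y : List (ℕ × ℕ)}
    (hs : CombFree d k a s) (ht : CombFree d k a t)
    (h : s.signature d k a ++ X = t.signature d k a ++ Y) : s = t ∧ X = Y := by
  induction s generalizing t a X Y with
  | leaf =>
    cases t with
    | leaf => exact ⟨rfl, List.append_cancel_left h⟩
    | node => exact (signature_leaf_append_ne_of_combFree ht h).elim
  | node l r ihl ihr =>
    cases t with
    | leaf => exact (signature_leaf_append_ne_of_combFree hs h.symm).elim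
    | node l' r' =>
      obtain ⟨-, hl, hr⟩ := combFree_node_iff.1 hs
      obtain ⟨-, hl', hr'⟩ := combFree_node_iff.1 ht
      simp only [signature_node, List.append_assoc] at h
      obtain ⟨rfl, hrest⟩ := ihl hl hl' h
      obtain ⟨rfl, hXY⟩ := ihr hr hr' hrest
      exact ⟨rfl, hXY⟩

theorem signature_injOn_combFree (d k a : ℕ) :
    Set.InjOn (signature d k a) {t | CombFree d k a t} :=
  fun _ hs _ ht h => (eq_and_eq_of_signature_append_eq hs ht (congrArg (· ++ []) h)).1

theorem Mnum_succ_le_Cdk (d k n : ℕ) : Mnum k (d + 1) n ≤ Cdk d (k + 1) n := by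
  rw [Mnum_eq_ncard_combFree, Cdk_eq_ncard_signature, Nat.add_sub_cancel,
    ← ((signature_injOn_combFree d (k + 1) 0).mono fun _ ht => ht.2).ncard_image]
  exact Set.ncard_le_ncard (Set.image_mono fun _ ht => ht.1)
    ((finite_setOf_numLeaves_eq (n + 1)).image _)

/-- `t'` has as many leaves and the same signature as `t`, but a smaller sum of left depths. Right
`k`-rotations at left depth at least `d - 1` have this effect, and the sum makes any sequence of
such steps terminate. -/
structure Reduces (d k a : ℕ) (t t' : BTree) : Prop where
  numLeaves_eq : t'.numLeaves = t.numLeaves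
  signature_eq : t'.signature d k a = t.signature d k a
  sum_lt : (t'.ldFrom a).sum < (t.ldFrom a).sum

namespace Reduces

theorem node_left {d k a : ℕ} {l l' : BTree} (h : Reduces d k (a + 1) l l') (r : BTree) :
    Reduces d k a (node l r) (node l' r) where
  numLeaves_eq := by simp [numLeaves, h.numLeaves_eq]
  signature_eq := by simp [h.signature_eq]
  sum_lt := by simpa using h.sum_lt

theorem node_right {d k a : ℕ} {r r' : BTree} (l : BTree) (h : Reduces d k a r r') :
    Reduces d k a (node l r) (node l r') where
  numLeaves_eq := by simp [numLeaves, h.numLeaves_eq]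
  signature_eq := by simp [h.signature_eq]
  sum_lt := by simpa using h.sum_lt

end Reduces

-- For `t = t₀ ∧ t₁ ∧ ⋯ ∧ t_{m+1}` the trees are `t₀` and `u = t₁ ∧ ⋯ ∧ t_{m+1}`.
theorem exists_ldFrom_eq_append_of_lt_spine {m : ℕ} {t : BTree} (hm : m < t.spine) :
    ∃ t₀ u : BTree, t.numLeaves = t₀.numLeaves + u.numLeaves ∧
      ∀ a, t.ldFrom a = t₀.ldFrom (a + m + 1) ++ u.ldFrom a := by
  induction m generalizing t with
  | zero =>
    cases t with
    | leaf => exact absurd hm (Nat.not_lt_zero 0)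
    | node l r => exact ⟨l, r, rfl, fun a => ldFrom_node a l r⟩
  | succ m ih =>
    cases t with
    | leaf => exact absurd hm (Nat.not_lt_zero _)
    | node l r =>
      obtain ⟨t₀, u, hleaves, hld⟩ := ih (Nat.lt_of_succ_lt_succ hm)
      refine ⟨t₀, node u r, by simp [numLeaves, hleaves, Nat.add_assoc], fun a => ?_⟩
      simp [hld, Nat.add_right_comm a 1 m, Nat.add_assoc]

theorem exists_reduces_of_lt_spine {d k a : ℕ} {t : BTree} (hk : 1 ≤ k) (ha : d ≤ a + 1)
    (hspine : k < t.spine) : ∃ t', Reduces d k a t t' := by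
  obtain ⟨t₀, u, hleaves, hld⟩ := exists_ldFrom_eq_append_of_lt_spine hspine
  have hld : t.ldFrom a = t₀.ldFrom (a + 1 + k) ++ u.ldFrom a := by
    rw [hld, Nat.add_right_comm]
  refine ⟨node t₀ u, hleaves.symm, ?_, ?_⟩
  · calc (node t₀ u).signature d k a
        = t₀.signature d k (a + 1 + k) ++ u.signature d k a := by
          rw [signature_node, signature_add_modulus ha]
      _ = t.signature d k a := by simp [signature, hld]
  · simpa [hld] using sum_ldFrom_strictMono t₀ (Nat.lt_add_of_pos_right (n := a + 1) hk)

theorem exists_reduces_of_not_combFree {d k a : ℕ} {t : BTree} (hk : 1 ≤ k)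
    (h : ¬ CombFree (d - 1) (k + 1) a t) : ∃ t', Reduces d k a t t' := by
  induction t generalizing a with
  | leaf => exact absurd (combFree_succ_leaf _ _ _) h
  | node l r ihl ihr =>
    by_cases hl : CombFree (d - 1) (k + 1) (a + 1) l
    · by_cases hr : CombFree (d - 1) (k + 1) a r
      · have hroot : ¬ (d - 1 ≤ a → (node l r).spine < k + 1) :=
          fun hroot => h (combFree_node_iff.2 ⟨hroot, hl, hr⟩)
        rw [Classical.not_imp] at hroot
        exact exists_reduces_of_lt_spine hk (by omega) (by omega)
      · exact (ihr hr).imp' _ fun _ h' => h'.node_right l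
    · exact (ihl hl).imp' _ fun _ h' => h'.node_left r

theorem exists_combFree_signature_eq {d k : ℕ} (hk : 1 ≤ k) (a : ℕ) (t : BTree) :
    ∃ s : BTree, s.numLeaves = t.numLeaves ∧ s.signature d k a = t.signature d k a ∧
      CombFree (d - 1) (k + 1) a s := by
  by_cases h : CombFree (d - 1) (k + 1) a t
  · exact ⟨t, rfl, rfl, h⟩
  · obtain ⟨t', ht'⟩ := exists_reduces_of_not_combFree hk h
    obtain ⟨s, hleaves, hsig, hs⟩ := exists_combFree_signature_eq hk a t'
    exact ⟨s, hleaves.trans ht'.numLeaves_eq, hsig.trans ht'.signature_eq, hs⟩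
termination_by (t.ldFrom a).sum
decreasing_by exact ht'.sum_lt

theorem Cdk_le_Mnum {k : ℕ} (hk : 1 ≤ k) (d n : ℕ) : Cdk d k n ≤ Mnum k d n := by
  have hfin := finite_setOf_combFree (n + 1) (d - 1) (k + 1) 0
  rw [Mnum_eq_ncard_combFree, Cdk_eq_ncard_signature]
  refine (Set.ncard_le_ncard ?_ (hfin.image (signature d k 0))).trans (Set.ncard_image_le hfin)
  rintro _ ⟨t, ht, rfl⟩
  obtain ⟨s, hleaves, hsig, hs⟩ := exists_combFree_signature_eq (d := d) hk 0 t
  exact ⟨s, ⟨hleaves.trans ht, hs⟩, hsig⟩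

theorem stmt16_general (d k n : ℕ) (hk : 1 ≤ k) :
    Mnum (k - 1) (d + 1) n ≤ Cdk d k n ∧ Cdk d k n ≤ Mnum k d n := by
  refine ⟨?_, Cdk_le_Mnum hk d n⟩
  simpa only [Nat.sub_add_cancel hk] using Mnum_succ_le_Cdk d (k - 1) n

/-- for `d,k ≥ 1` and `n ≥ 0`, `M^d_{k-1,n} ≤ C^d_{k,n} ≤ M^d_{k,n}`. -/
theorem stmt16 (d k n : ℕ) (hd : 1 ≤ d) (hk : 1 ≤ k) :
    Mnum (k - 1) d n ≤ Cdk d k n ∧ Cdk d k n ≤ Mnum k d n :=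
  (stmt16_general d k n hk).imp_left (Mnum_mono (k - 1) n (Nat.le_succ d)).trans
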